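/- Let D ⊆ ℂ be open and let B, f, f⋆, ψ, ω, ρ : D → ℂ be real-differentiable on D. Assume: ∂_{λ̄} f = B·conj(f), ∂_{λ̄} f⋆ = −conj(B)·conj(f⋆), ∂_{λ̄} ψ = B·conj(ψ) on D; ω satisfies ∂_λ ω = f·f⋆, ∂_{λ̄} ω = −conj(f·f⋆), conj(ω) = −ω and ω(λ) ≠ 0 on D; ρ satisfies ∂_λ ρ = ψ·f⋆, ∂_{λ̄} ρ = −conj(ψ·f⋆) and conj(ρ) = −ρ on D. Then the Moutard-transformed function ψ̃ := ψ − (ρ/ω)·f satisfies ∂_{λ̄} ψ̃ = B̃·conj(ψ̃) on D, where B̃ := B + f·conj(f⋆)/ω. -/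

import Mathlib

/-!
Since `ρ` and `ω` are purely imaginary, `r = ρ / ω` is real. Subtracting `r • f` from `ψ` therefore
preserves the equation `∂_{λ̄} u = B · conj u` up to the error `-(∂_{λ̄} r) f`. The quotient rule
gives `∂_{λ̄} r = -(conj f⋆ / ω) · conj (ψ - r f)`, which is again proportional to `conj ψ̃`, so the
error is absorbed into the coefficient and turns `B` into `B + f · conj f⋆ / ω`.
-/

open Complex ComplexConjugate

/-- Wirtinger derivative `∂_{λ̄} u` of `u : ℂ → ℂ`, viewed as a real-differentiable map. -/
noncomputable def dbar (u : ℂ → ℂ) (l : ℂ) : ℂ :=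
  (1 / 2 : ℂ) * ((fderiv ℝ u l) 1 + Complex.I * (fderiv ℝ u l) Complex.I)

/-- Wirtinger derivative `∂_λ u`. -/
noncomputable def dz (u : ℂ → ℂ) (l : ℂ) : ℂ :=
  (1 / 2 : ℂ) * ((fderiv ℝ u l) 1 - Complex.I * (fderiv ℝ u l) Complex.I)

section Wirtinger

variable {u v : ℂ → ℂ} {l : ℂ}

theorem dbar_sub (hu : DifferentiableAt ℝ u l) (hv : DifferentiableAt ℝ v l) :
    dbar (fun w => u w - v w) l = dbar u l - dbar v l := by
  simp only [dbar, fderiv_fun_sub hu hv, sub_apply]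
  ring

theorem dbar_mul (hu : DifferentiableAt ℝ u l) (hv : DifferentiableAt ℝ v l) :
    dbar (fun w => u w * v w) l = dbar u l * v l + u l * dbar v l := by
  simp only [dbar, fderiv_fun_mul hu hv, add_apply, smul_apply, smul_eq_mul]
  ring

theorem dbar_inv (hv : DifferentiableAt ℝ v l) (hvl : v l ≠ 0) :
    dbar (fun w => (v w)⁻¹) l = -dbar v l / v l ^ 2 := by
  have hfderiv := ((hasFDerivAt_inv' hvl).comp l hv.hasFDerivAt).fderiv
  simp only [Function.comp_def] at hfderiv
  simp only [dbar, hfderiv, ContinuousLinearMap.comp_apply, neg_apply,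
    ContinuousLinearMap.mulLeftRight_apply]
  ring

theorem dbar_div (hu : DifferentiableAt ℝ u l) (hv : DifferentiableAt ℝ v l) (hvl : v l ≠ 0) :
    dbar (fun w => u w / v w) l = (dbar u l * v l - u l * dbar v l) / v l ^ 2 := by
  simp only [div_eq_mul_inv (u _)]
  rw [dbar_mul hu (hv.fun_inv hvl), dbar_inv hv hvl]
  field_simp
  ring

end Wirtinger

section Moutard

variable {f ψ : ℂ → ℂ} {l : ℂ}

theorem dbar_sub_mul_of_conj_eq {r : ℂ → ℂ} {b : ℂ}
    (hf : DifferentiableAt ℝ f l) (hψ : DifferentiableAt ℝ ψ l) (hr : DifferentiableAt ℝ r l)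
    (hf_eq : dbar f l = b * conj (f l)) (hψ_eq : dbar ψ l = b * conj (ψ l))
    (hr_real : conj (r l) = r l) :
    dbar (fun w => ψ w - r w * f w) l = b * conj (ψ l - r l * f l) - dbar r l * f l := by
  rw [dbar_sub hψ (hr.fun_mul hf), dbar_mul hr hf, hf_eq, hψ_eq, map_sub, map_mul, hr_real]
  ring

theorem dbar_div_of_dbar_eq_neg_conj_mul {ω ρ : ℂ → ℂ} {a b c : ℂ}
    (hω : DifferentiableAt ℝ ω l) (hρ : DifferentiableAt ℝ ρ l) (hω_ne : ω l ≠ 0)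
    (hω_eq : dbar ω l = -conj (a * c)) (hρ_eq : dbar ρ l = -conj (b * c))
    (hr_real : conj (ρ l / ω l) = ρ l / ω l) :
    dbar (fun w => ρ w / ω w) l = -(conj c / ω l) * conj (b - ρ l / ω l * a) := by
  rw [dbar_div hρ hω hω_ne, hω_eq, hρ_eq, map_sub, map_mul _ (ρ l / ω l), hr_real, map_mul, map_mul]
  field_simp
  ring

theorem moutard_transform_psi_general {B fs ω ρ : ℂ → ℂ}
    (hf : DifferentiableAt ℝ f l) (hψ : DifferentiableAt ℝ ψ l)
    (hω : DifferentiableAt ℝ ω l) (hρ : DifferentiableAt ℝ ρ l)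
    (hf_eq : dbar f l = B l * conj (f l)) (hψ_eq : dbar ψ l = B l * conj (ψ l))
    (hω_eq : dbar ω l = -conj (f l * fs l)) (hω_imag : conj (ω l) = -ω l) (hω_ne : ω l ≠ 0)
    (hρ_eq : dbar ρ l = -conj (ψ l * fs l)) (hρ_imag : conj (ρ l) = -ρ l) :
    dbar (fun w => ψ w - (ρ w / ω w) * f w) l =
      (B l + f l * conj (fs l) / ω l) * conj (ψ l - (ρ l / ω l) * f l) := by
  have hr_real : conj (ρ l / ω l) = ρ l / ω l := by
    rw [map_div₀, hρ_imag, hω_imag, neg_div_neg_eq]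
  have hr : DifferentiableAt ℝ (fun w => ρ w / ω w) l := by
    simpa only [div_eq_mul_inv] using hρ.fun_mul (hω.fun_inv hω_ne)
  rw [dbar_sub_mul_of_conj_eq hf hψ hr hf_eq hψ_eq hr_real,
    dbar_div_of_dbar_eq_neg_conj_mul hω hρ hω_ne hω_eq hρ_eq hr_real]
  ring

end Moutard

/-- Moutard-type transform for generalized analytic functions:
the transformed function `ψ̃ = ψ - (ρ/ω)·f` satisfies `∂_{λ̄} ψ̃ = B̃·conj ψ̃`
with `B̃ = B + f·conj(f⋆)/ω`. -/
theorem moutard_transform_psi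
    (D : Set ℂ) (hD : IsOpen D)
    (B f fs ψ ω ρ : ℂ → ℂ)
    (hBdiff : ∀ l ∈ D, DifferentiableAt ℝ B l)
    (hfdiff : ∀ l ∈ D, DifferentiableAt ℝ f l)
    (hfsdiff : ∀ l ∈ D, DifferentiableAt ℝ fs l)
    (hψdiff : ∀ l ∈ D, DifferentiableAt ℝ ψ l)
    (hωdiff : ∀ l ∈ D, DifferentiableAt ℝ ω l)
    (hρdiff : ∀ l ∈ D, DifferentiableAt ℝ ρ l)
    (hf : ∀ l ∈ D, dbar f l = B l * conj (f l))
    (hfs : ∀ l ∈ D, dbar fs l = -conj (B l) * conj (fs l))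
    (hψ : ∀ l ∈ D, dbar ψ l = B l * conj (ψ l))
    (hω1 : ∀ l ∈ D, dz ω l = f l * fs l)
    (hω2 : ∀ l ∈ D, dbar ω l = -conj (f l * fs l))
    (hω3 : ∀ l ∈ D, conj (ω l) = -ω l)
    (hω4 : ∀ l ∈ D, ω l ≠ 0)
    (hρ1 : ∀ l ∈ D, dz ρ l = ψ l * fs l)
    (hρ2 : ∀ l ∈ D, dbar ρ l = -conj (ψ l * fs l))
    (hρ3 : ∀ l ∈ D, conj (ρ l) = -ρ l) :
    ∀ l ∈ D,
      dbar (fun w => ψ w - (ρ w / ω w) * f w) l =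
        (B l + f l * conj (fs l) / ω l) * conj (ψ l - (ρ l / ω l) * f l) := by
  intro l hl
  exact moutard_transform_psi_general (hfdiff l hl) (hψdiff l hl) (hωdiff l hl) (hρdiff l hl)
    (hf l hl) (hψ l hl) (hω2 l hl) (hω3 l hl) (hω4 l hl) (hρ2 l hl) (hρ3 l hl)
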